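/- arXiv:1111.6156 — 6 statements merged into one kernel-verified Lean document; each statement's English description precedes it below -/
import Mathlib

section
/- Let F = (R, Σ) be a subset-free congestion game form. Then F is tree representable (i.e., F has no bad configuration) if and only if every monotone symmetric congestion game G ∈ 𝒢(F) satisfies Z(G) = NE(G). -/
/-!
For `x ⊆ ρ` and a set `U` of players put `F x = ∑ r ∈ x, P r (c_U r + 1)`, the value of `x` to a
newcomer joining `U`, and let `D y = ∑ r ∈ y, (P r (c_U r + 1) - P r (c_U r + 2)) ≥ 0` be the loss
on `y` caused by one more user. If a further player `j ∉ U` plays `b`, the value of `x` becomes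
`F x - D (x ∩ b)` (`joinVal_insert`). The absence of bad configurations is exactly an
ultrametric-type property: for `a, b, t ∈ SS` one has `a ∩ t ⊆ b ∩ t` or `a ∩ b ⊆ b ∩ t`
(`inter_dichotomy`).

With these two facts, a best-responding newcomer preserves equilibrium (`NEOn.insert`), so greedy
profiles are equilibria by induction along the order. Conversely, in an equilibrium a player of
lowest utility can be removed without destroying equilibrium (`NEOn.exists_erase`), and removing
players one after the other yields, in reverse, an order exhibiting the equilibrium as greedy.

Given a bad configuration `A, B, s₁, s₂, s₃`, consider two players, where `A` and `B` are worth a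
large `M` to a single user and `-M` when shared, and every other resource costs its congestion.
Among pairs `(x, y)` with `x` containing `A` but not `B` and `y` containing `B` but not `A`, one
minimizing the potential `|x| + |y| + |x ∩ y|` is an equilibrium. It is not greedy, since the first
mover would prefer `s₁`, which contains both `A` and `B`.
-/

open Finset

/-- Congestion of resource `r` under strategy profile `s` (players `ι`). -/
def cgCong {ρ ι : Type} [DecidableEq ρ] [Fintype ι] (s : ι → Finset ρ) (r : ρ) : ℕ :=
  (Finset.univ.filter (fun i => r ∈ s i)).card

/-- Utility of player `i`: the sum of `P r (c(s)_r)` over the resources she uses. -/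
def cgUtil {ρ ι : Type} [DecidableEq ρ] [Fintype ι] (P : ρ → ℕ → ℝ)
    (s : ι → Finset ρ) (i : ι) : ℝ :=
  ∑ r ∈ s i, P r (cgCong s r)

/-- A strategy profile: every player selects a strategy from the strategy set `SS`. -/
def IsProfile {ρ ι : Type} (SS : Finset (Finset ρ)) (s : ι → Finset ρ) : Prop :=
  ∀ i, s i ∈ SS

/-- Pure Nash equilibrium. -/
def IsNE {ρ ι : Type} [DecidableEq ρ] [DecidableEq ι] [Fintype ι]
    (SS : Finset (Finset ρ)) (P : ρ → ℕ → ℝ) (s : ι → Finset ρ) : Prop :=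
  IsProfile SS s ∧
    ∀ i : ι, ∀ t ∈ SS, cgUtil P s i ≥ cgUtil P (Function.update s i t) i

/-- The congestion seen by player `i` on resource `r` from players preceding her
in the order `π`. -/
def greedyCong {ρ ι : Type} [DecidableEq ρ] [Fintype ι] (s : ι → Finset ρ)
    (π : ι → ℕ) (i : ι) (r : ρ) : ℕ :=
  (Finset.univ.filter (fun j => r ∈ s j ∧ π j < π i)).card

/-- Greedy profile: for some linear order (injective ranking `π`) of the players,
each player's strategy is a best response to the choices of her predecessors. -/
def IsGreedy {ρ ι : Type} [DecidableEq ρ] [Fintype ι]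
    (SS : Finset (Finset ρ)) (P : ρ → ℕ → ℝ) (s : ι → Finset ρ) : Prop :=
  IsProfile SS s ∧
    ∃ π : ι → ℕ, Function.Injective π ∧ ∀ i : ι, ∀ t ∈ SS,
      (∑ r ∈ s i, P r (greedyCong s π i r + 1)) ≥
        ∑ r ∈ t, P r (greedyCong s π i r + 1)

/-- Monotone resource payoffs (for a game with `n` players):
`P_r(k) > P_r(l)` whenever `1 ≤ k < l ≤ n`. -/
def MonotonePay {ρ : Type} (n : ℕ) (P : ρ → ℕ → ℝ) : Prop :=
  ∀ r : ρ, ∀ k l : ℕ, 1 ≤ k → k < l → l ≤ n → P r k > P r l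

/-- A congestion game form: nonempty strategy set consisting of nonempty resource sets. -/
def ValidForm {ρ : Type} (SS : Finset (Finset ρ)) : Prop :=
  SS.Nonempty ∧ ∀ s ∈ SS, s.Nonempty

/-- Subset-free strategy set. -/
def SubsetFree {ρ : Type} (SS : Finset (Finset ρ)) : Prop :=
  ∀ s ∈ SS, ∀ t ∈ SS, s ≠ t → ¬ s ⊆ t

/-- A bad configuration (Holzman–Law Yone): a form is tree representable iff
it has no bad configuration. -/
def BadConfig {ρ : Type} (SS : Finset (Finset ρ)) : Prop :=
  ∃ A B : ρ, ∃ s1 ∈ SS, ∃ s2 ∈ SS, ∃ s3 ∈ SS,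
    A ∈ s1 ∧ B ∈ s1 ∧ A ∈ s2 ∧ A ∉ s3 ∧ B ∈ s3 ∧ B ∉ s2

/-! ### Equilibria on a subset of the players -/

section General

variable {ρ ι : Type} [DecidableEq ρ] [DecidableEq ι]

/-- Congestion of `r` caused by the players in `T`. -/
def cnt (s : ι → Finset ρ) (T : Finset ι) (r : ρ) : ℕ :=
  (T.filter (fun i => r ∈ s i)).card

/-- Value of the resource set `x` to a player joining the players of `T`. -/
def joinVal (P : ρ → ℕ → ℝ) (s : ι → Finset ρ) (T : Finset ι) (x : Finset ρ) : ℝ :=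
  ∑ r ∈ x, P r (cnt s T r + 1)

/-- `x` is a best response to the choices of the players in `T`. -/
def BROn (SS : Finset (Finset ρ)) (P : ρ → ℕ → ℝ) (s : ι → Finset ρ) (T : Finset ι)
    (x : Finset ρ) : Prop :=
  ∀ t ∈ SS, joinVal P s T t ≤ joinVal P s T x

/-- The restriction of `s` to the players in `S` is an equilibrium of the game they play. -/
def NEOn (SS : Finset (Finset ρ)) (P : ρ → ℕ → ℝ) (s : ι → Finset ρ) (S : Finset ι) : Prop :=
  ∀ i ∈ S, BROn SS P s (S.erase i) (s i)

/-- The marginal loss on the resources in `y` caused by one more user beside `U` and a newcomer. -/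
def loss (P : ρ → ℕ → ℝ) (s : ι → Finset ρ) (U : Finset ι) (y : Finset ρ) : ℝ :=
  ∑ r ∈ y, (P r (cnt s U r + 1) - P r (cnt s U r + 2))

lemma joinVal_insert (P : ρ → ℕ → ℝ) (s : ι → Finset ρ) {U : Finset ι} {j : ι} (hj : j ∉ U)
    (x : Finset ρ) : joinVal P s (insert j U) x = joinVal P s U x - loss P s U (x ∩ s j) := by
  unfold joinVal loss
  rw [← Finset.filter_mem_eq_inter, Finset.sum_filter, ← Finset.sum_sub_distrib]
  refine Finset.sum_congr rfl fun r _ => ?_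
  by_cases h : r ∈ s j
  · have : cnt s (insert j U) r = cnt s U r + 1 := by
      unfold cnt
      rw [Finset.filter_insert, if_pos h, Finset.card_insert_of_notMem (by simp [hj])]
    simp [this, h]
  · have : cnt s (insert j U) r = cnt s U r := by
      unfold cnt
      rw [Finset.filter_insert, if_neg h]
    simp [this, h]

lemma loss_mono [Fintype ι] {P : ρ → ℕ → ℝ} (hP : MonotonePay (Fintype.card ι) P)
    (s : ι → Finset ρ) {U : Finset ι} {i j : ι} (hij : i ≠ j) (hi : i ∉ U) (hj : j ∉ U)
    {x y : Finset ρ} (hxy : x ⊆ y) : loss P s U x ≤ loss P s U y := by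
  refine Finset.sum_le_sum_of_subset_of_nonneg hxy fun r _ _ => ?_
  have h1 : cnt s U r ≤ U.card := Finset.card_filter_le _ _
  -- Two players lie outside `U`, so the payoffs involved are within the monotone range.
  have h2 : (insert i (insert j U)).card ≤ Fintype.card ι := Finset.card_le_univ _
  rw [Finset.card_insert_of_notMem (by simp [hij, hi]), Finset.card_insert_of_notMem hj] at h2
  have := hP r (cnt s U r + 1) (cnt s U r + 2) (by omega) (by omega) (by omega)
  linarith

lemma inter_dichotomy {SS : Finset (Finset ρ)} (h : ¬ BadConfig SS) {a b t : Finset ρ}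
    (ha : a ∈ SS) (hb : b ∈ SS) (ht : t ∈ SS) : a ∩ t ⊆ b ∩ t ∨ a ∩ b ⊆ b ∩ t := by
  by_contra! hcon
  obtain ⟨h1, h2⟩ := hcon
  obtain ⟨A, hA, hA'⟩ := Finset.not_subset.1 h1
  obtain ⟨B, hB, hB'⟩ := Finset.not_subset.1 h2
  simp only [Finset.mem_inter] at hA hA' hB hB'
  exact h ⟨A, B, a, ha, t, ht, b, hb, by tauto⟩

/-- A newcomer playing a best response preserves equilibrium. -/
lemma NEOn.insert [Fintype ι] {SS : Finset (Finset ρ)} (hbad : ¬ BadConfig SS) {P : ρ → ℕ → ℝ}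
    (hP : MonotonePay (Fintype.card ι) P) {s : ι → Finset ρ} (hs : IsProfile SS s) {S : Finset ι}
    {j : ι} (hj : j ∉ S) (hNE : NEOn SS P s S) (hBR : BROn SS P s S (s j)) :
    NEOn SS P s (insert j S) := by
  intro i hi
  rcases Finset.mem_insert.1 hi with rfl | hiS
  · rwa [Finset.erase_insert hj]
  have hij : i ≠ j := fun h => hj (h ▸ hiS)
  intro t ht
  have hU : j ∉ S.erase i := fun h => hj (Finset.mem_of_mem_erase h)
  have hiU : i ∉ S.erase i := Finset.notMem_erase i S
  rw [Finset.erase_insert_of_ne hij.symm, joinVal_insert P s hU, joinVal_insert P s hU]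
  have e1 := hNE i hiS t ht
  have e2 := hNE i hiS (s j) (hs j)
  have e3 := hBR t ht
  rw [← Finset.insert_erase hiS, joinVal_insert P s hiU, joinVal_insert P s hiU,
    Finset.inter_comm (s j), Finset.inter_comm t] at e3
  rw [Finset.inter_comm t]
  rcases inter_dichotomy hbad (hs i) (hs j) ht with h | h
  · have := loss_mono hP s hij hiU hU h
    linarith
  · have := loss_mono hP s hij hiU hU h
    linarith

/-- In an equilibrium, a player of lowest utility can be removed without destroying equilibrium. -/
lemma NEOn.exists_erase [Fintype ι] {SS : Finset (Finset ρ)} (hbad : ¬ BadConfig SS)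
    {P : ρ → ℕ → ℝ} (hP : MonotonePay (Fintype.card ι) P) {s : ι → Finset ρ}
    (hs : IsProfile SS s) {S : Finset ι} (hS : S.Nonempty) (hNE : NEOn SS P s S) :
    ∃ j ∈ S, NEOn SS P s (S.erase j) := by
  obtain ⟨j, hjS, hmin⟩ := Finset.exists_min_image S (fun i => joinVal P s (S.erase i) (s i)) hS
  refine ⟨j, hjS, fun i hi t ht => ?_⟩
  obtain ⟨hij, hiS⟩ := Finset.mem_erase.1 hi
  set U := (S.erase j).erase i with hU
  have hjU : j ∉ U := by simp [hU]
  have hiU : i ∉ U := by simp [hU]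
  have eqi : S.erase i = Insert.insert j U := by
    rw [hU, Finset.erase_right_comm, Finset.insert_erase (Finset.mem_erase.2 ⟨hij.symm, hjS⟩)]
  have eqj : S.erase j = Insert.insert i U := by
    rw [hU, Finset.insert_erase (Finset.mem_erase.2 ⟨hij, hiS⟩)]
  have e1 := hNE i hiS t ht
  have e2 := hNE j hjS t ht
  have e3 := hmin i hiS
  simp only [eqi, eqj, joinVal_insert P s hjU, joinVal_insert P s hiU] at e1 e2 e3
  rw [Finset.inter_comm (s j)] at e2 e3
  rcases inter_dichotomy hbad ht (hs i) (hs j) with h | h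
  · have := loss_mono hP s hij hiU hjU h
    linarith
  · have := loss_mono hP s hij hiU hjU h
    linarith

/-! ### Comparison with greedy profiles and Nash equilibria -/

lemma isGreedy_iff [Fintype ι] {SS : Finset (Finset ρ)} {P : ρ → ℕ → ℝ} {s : ι → Finset ρ} :
    IsGreedy SS P s ↔ IsProfile SS s ∧ ∃ π : ι → ℕ, Function.Injective π ∧
      ∀ i, BROn SS P s (Finset.univ.filter fun j => π j < π i) (s i) := by
  have key : ∀ (π : ι → ℕ) i r,
      greedyCong s π i r = cnt s (Finset.univ.filter fun j => π j < π i) r := by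
    intro π i r
    unfold greedyCong cnt
    rw [Finset.filter_filter]
    simp only [and_comm]
  simp only [IsGreedy, BROn, joinVal, key, ge_iff_le]

lemma cgUtil_update [Fintype ι] (P : ρ → ℕ → ℝ) (s : ι → Finset ρ) (i : ι) (t : Finset ρ) :
    cgUtil P (Function.update s i t) i = joinVal P s (Finset.univ.erase i) t := by
  unfold cgUtil joinVal
  rw [Function.update_self]
  refine Finset.sum_congr rfl fun r hr => ?_
  congr 1
  unfold cgCong cnt
  rw [← Finset.insert_erase (Finset.mem_univ i), Finset.filter_insert,
    if_pos (by simpa using hr), Finset.card_insert_of_notMem (by simp)]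
  congr 2
  rw [Finset.insert_erase (Finset.mem_univ i)]
  refine Finset.filter_congr fun k hk => ?_
  rw [Function.update_of_ne (Finset.ne_of_mem_erase hk)]

lemma isNE_iff [Fintype ι] {SS : Finset (Finset ρ)} {P : ρ → ℕ → ℝ} {s : ι → Finset ρ} :
    IsNE SS P s ↔ IsProfile SS s ∧ NEOn SS P s Finset.univ := by
  have key : ∀ i, cgUtil P s i = joinVal P s (Finset.univ.erase i) (s i) := fun i => by
    rw [← cgUtil_update, Function.update_eq_self]
  simp only [IsNE, NEOn, BROn, cgUtil_update, key, ge_iff_le, Finset.mem_univ, forall_true_left]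

lemma IsGreedy.isNE [Fintype ι] {SS : Finset (Finset ρ)} (hbad : ¬ BadConfig SS) {P : ρ → ℕ → ℝ}
    (hP : MonotonePay (Fintype.card ι) P) {s : ι → Finset ρ} (h : IsGreedy SS P s) :
    IsNE SS P s := by
  obtain ⟨hs, π, hπ, hBR⟩ := isGreedy_iff.1 h
  refine isNE_iff.2 ⟨hs, ?_⟩
  have step : ∀ k, NEOn SS P s (Finset.univ.filter fun j => π j < k) := by
    intro k
    induction k with
    | zero => intro i hi; simp at hi
    | succ k ih =>
      by_cases hk : ∃ j, π j = k
      · obtain ⟨j, rfl⟩ := hk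
        have : (Finset.univ.filter fun l => π l < π j + 1)
            = Insert.insert j (Finset.univ.filter fun l => π l < π j) := by
          ext l
          simp only [Finset.mem_filter, Finset.mem_univ, true_and, Finset.mem_insert,
            Nat.lt_succ_iff_lt_or_eq, hπ.eq_iff]
          tauto
        rw [this]
        exact NEOn.insert hbad hP hs (by simp) ih (hBR j)
      · have : (Finset.univ.filter fun l => π l < k + 1)
            = (Finset.univ.filter fun l => π l < k) := by
          refine Finset.filter_congr fun l _ => ?_
          have : π l ≠ k := fun h => hk ⟨l, h⟩
          omega
        rwa [this]
  have := step (Finset.univ.sup π + 1)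
  rwa [Finset.filter_true_of_mem] at this
  exact fun l hl => Nat.lt_succ_of_le (Finset.le_sup hl)

lemma NEOn.exists_order [Fintype ι] {SS : Finset (Finset ρ)} (hbad : ¬ BadConfig SS)
    {P : ρ → ℕ → ℝ} (hP : MonotonePay (Fintype.card ι) P) {s : ι → Finset ρ}
    (hs : IsProfile SS s) (m : ℕ) : ∀ S : Finset ι, S.card = m → NEOn SS P s S →
      ∃ π : ι → ℕ, Set.InjOn π S ∧ (∀ i ∈ S, π i < m) ∧
        ∀ i ∈ S, BROn SS P s (S.filter fun j => π j < π i) (s i) := by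
  induction m with
  | zero =>
    intro S hS _
    rw [Finset.card_eq_zero] at hS
    subst hS
    exact ⟨fun _ => 0, by simp, by simp, by simp⟩
  | succ m ih =>
    intro S hS hNE
    obtain ⟨j, hjS, hj⟩ := hNE.exists_erase hbad hP hs (Finset.card_pos.1 (by omega))
    obtain ⟨π, hinj, hlt, hBR⟩ := ih (S.erase j) (by rw [Finset.card_erase_of_mem hjS]; omega) hj
    -- The removed player is ranked last.
    have hup : ∀ i ∈ S, i ≠ j → Function.update π j m i = π i ∧ π i < m := fun i hi hij =>
      ⟨Function.update_of_ne hij _ _, hlt i (Finset.mem_erase.2 ⟨hij, hi⟩)⟩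
    have hself : Function.update π j m j = m := Function.update_self _ _ _
    refine ⟨Function.update π j m, ?_, ?_, ?_⟩
    · intro x hx y hy hxy
      by_cases hxj : x = j <;> by_cases hyj : y = j
      · rw [hxj, hyj]
      · have := hup y hy hyj
        rw [hxj, hself] at hxy
        omega
      · have := hup x hx hxj
        rw [hyj, hself] at hxy
        omega
      · rw [(hup x hx hxj).1, (hup y hy hyj).1] at hxy
        exact hinj (by simpa [hxj] using hx) (by simpa [hyj] using hy) hxy
    · intro i hi
      by_cases hij : i = j
      · rw [hij, hself]; omega
      · have := hup i hi hij
        omega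
    · intro i hi
      by_cases hij : i = j
      · subst hij
        have : (S.filter fun k => Function.update π i m k < Function.update π i m i)
            = S.erase i := by
          ext k
          simp only [Finset.mem_filter, Finset.mem_erase, hself]
          constructor
          · rintro ⟨hk, hlt'⟩
            refine ⟨?_, hk⟩
            rintro rfl
            omega
          · rintro ⟨hki, hk⟩
            have := hup k hk hki
            exact ⟨hk, by omega⟩
        rw [this]
        exact hNE i hi
      · have : (S.filter fun k => Function.update π j m k < Function.update π j m i)
            = (S.erase j).filter fun k => π k < π i := by
          ext k
          have hi' := hup i hi hij
          simp only [Finset.mem_filter, Finset.mem_erase]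
          by_cases hkj : k = j
          · subst hkj
            simp only [hself, ne_eq, not_true_eq_false, false_and, iff_false]
            rintro ⟨_, h⟩
            omega
          · rw [hi'.1, Function.update_of_ne hkj]
            simp [hkj]
        rw [this]
        exact hBR i (Finset.mem_erase.2 ⟨hij, hi⟩)

lemma IsNE.isGreedy [Fintype ι] {SS : Finset (Finset ρ)} (hbad : ¬ BadConfig SS) {P : ρ → ℕ → ℝ}
    (hP : MonotonePay (Fintype.card ι) P) {s : ι → Finset ρ} (h : IsNE SS P s) :
    IsGreedy SS P s := by
  obtain ⟨hs, hNE⟩ := isNE_iff.1 h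
  obtain ⟨π, hinj, -, hBR⟩ := NEOn.exists_order hbad hP hs _ Finset.univ rfl hNE
  exact isGreedy_iff.2 ⟨hs, π, fun x y => hinj (by simp) (by simp),
    fun i => hBR i (Finset.mem_univ i)⟩

end General

/-! ### The two-player game of a bad configuration -/

section Counterexample

variable {ρ : Type} [DecidableEq ρ]

/-- Payoffs of the counterexample: `A` and `B` pay `M` to a single user and `-M` to each of two
users; any other resource costs its congestion. -/
def badPay (A B : ρ) (M : ℝ) (r : ρ) (k : ℕ) : ℝ :=
  if r = A ∨ r = B then M * (3 - 2 * k) else -k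

lemma badPay_mono (A B : ρ) {M : ℝ} (hM : 0 < M) (n : ℕ) : MonotonePay n (badPay A B M) := by
  intro r k l _ hkl _
  have : (k : ℝ) < l := by exact_mod_cast hkl
  unfold badPay
  split_ifs
  · nlinarith
  · linarith

/-- Value of `x` to a player whose only opponent plays `y`. -/
def duel (A B : ρ) (M : ℝ) (x y : Finset ρ) : ℝ :=
  ∑ r ∈ x, badPay A B M r (if r ∈ y then 2 else 1)

lemma duel_swap (A B : ρ) (M : ℝ) (x y : Finset ρ) : duel B A M x y = duel A B M x y := by
  unfold duel badPay
  simp only [or_comm]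

lemma duel_eq {A B : ρ} {M : ℝ} {x y : Finset ρ} (hAx : A ∈ x) (hBx : B ∉ x) (hAy : A ∉ y) :
    duel A B M x y = M + 1 - x.card - (x ∩ y).card := by
  unfold duel
  rw [← Finset.add_sum_erase _ _ hAx]
  have h1 : ∀ r ∈ x.erase A, badPay A B M r (if r ∈ y then 2 else 1)
      = -1 - (if r ∈ y then 1 else 0) := by
    intro r hr
    obtain ⟨hrA, hrx⟩ := Finset.mem_erase.1 hr
    have hrB : r ≠ B := fun h => hBx (h ▸ hrx)
    unfold badPay
    simp only [hrA, hrB, or_self, if_false]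
    split_ifs <;> norm_num
  rw [Finset.sum_congr rfl h1, Finset.sum_sub_distrib, Finset.sum_boole, Finset.sum_const,
    Finset.card_erase_of_mem hAx, Finset.filter_mem_eq_inter]
  have h2 : x.erase A ∩ y = x ∩ y := by
    rw [Finset.erase_inter, Finset.erase_eq_of_notMem (by simp [hAy])]
  have h3 : 1 ≤ x.card := Finset.card_pos.2 ⟨A, hAx⟩
  rw [h2]
  simp [badPay, hAy, Nat.cast_sub h3]
  ring

/-- Any set that uses the opponent's special resource `B`, or does not use `A`, has value at
most `0`. -/
lemma duel_nonpos {A B : ρ} {M : ℝ} (hM : 0 ≤ M) {x y : Finset ρ} (hAB : A ≠ B) (hBy : B ∈ y)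
    (hx : B ∈ x ∨ A ∉ x) (hAy : A ∉ y) : duel A B M x y ≤ 0 := by
  unfold duel
  have bound : ∀ r ∈ x, badPay A B M r (if r ∈ y then 2 else 1)
      ≤ (if r = A then M else 0) - (if r = B then M else 0) := by
    intro r _
    unfold badPay
    by_cases hA : r = A
    · subst hA
      simp [hAB, hAy]
      linarith
    · by_cases hB : r = B
      · subst hB
        simp [hA, hBy]
        linarith
      · simp only [hA, hB, or_self, if_false]
        split_ifs <;> norm_num
  refine (Finset.sum_le_sum bound).trans ?_
  rw [Finset.sum_sub_distrib, Finset.sum_ite_eq', Finset.sum_ite_eq']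
  split_ifs <;> first | linarith | tauto

lemma joinVal_singleton (A B : ρ) (M : ℝ) (s : Fin 2 → Finset ρ) (j : Fin 2) (t : Finset ρ) :
    joinVal (badPay A B M) s {j} t = duel A B M t (s j) := by
  unfold joinVal duel
  refine Finset.sum_congr rfl fun r _ => ?_
  congr 1
  unfold cnt
  rw [Finset.filter_singleton]
  split_ifs <;> simp

/-- Minimality of the potential along deviations that keep `A` and avoid `B` yields a best
response; all other deviations are worth at most `0`. -/
lemma duel_best [Fintype ρ] {SS : Finset (Finset ρ)} {A B : ρ} {M : ℝ}
    (hM : M = 2 * Fintype.card ρ + 1) {x y : Finset ρ} (hAB : A ≠ B) (hAx : A ∈ x) (hBx : B ∉ x)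
    (hBy : B ∈ y) (hAy : A ∉ y)
    (hmin : ∀ t ∈ SS, A ∈ t → B ∉ t → x.card + (x ∩ y).card ≤ t.card + (t ∩ y).card) :
    ∀ t ∈ SS, duel A B M t y ≤ duel A B M x y := by
  intro t ht
  have hMpos : 0 ≤ M := by rw [hM]; positivity
  rw [duel_eq hAx hBx hAy]
  by_cases h : B ∈ t ∨ A ∉ t
  · have h0 := duel_nonpos hMpos hAB hBy h hAy
    have h1 : (x.card : ℝ) ≤ Fintype.card ρ := by exact_mod_cast Finset.card_le_univ x
    have h2 : ((x ∩ y).card : ℝ) ≤ Fintype.card ρ := by exact_mod_cast Finset.card_le_univ _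
    linarith
  · push Not at h
    rw [duel_eq h.2 h.1 hAy]
    have : (x.card : ℝ) + (x ∩ y).card ≤ t.card + (t ∩ y).card := by
      exact_mod_cast hmin t ht h.2 h.1
    linarith

/-- A first mover values a set containing both `A` and `B` above any set avoiding `B`. -/
lemma first_mover [Fintype ρ] {A B : ρ} {M : ℝ} (hM : M = 2 * Fintype.card ρ + 1)
    (s : Fin 2 → Finset ρ) {x z : Finset ρ} (hAB : A ≠ B) (hBx : B ∉ x) (hAz : A ∈ z)
    (hBz : B ∈ z) : joinVal (badPay A B M) s ∅ x < joinVal (badPay A B M) s ∅ z := by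
  have hMpos : 0 < M := by rw [hM]; positivity
  have hup : joinVal (badPay A B M) s ∅ x ≤ M := by
    have : ∀ r ∈ x, badPay A B M r (cnt s ∅ r + 1) ≤ if r = A then M else 0 := by
      intro r hr
      have hrB : r ≠ B := fun h => hBx (h ▸ hr)
      by_cases hA : r = A
      · simp [badPay, cnt, hA]
        linarith
      · simp [badPay, cnt, hA, hrB]
    refine (Finset.sum_le_sum this).trans ?_
    rw [Finset.sum_ite_eq']
    split_ifs <;> linarith
  have hlo : 2 * M - z.card ≤ joinVal (badPay A B M) s ∅ z := by
    have : ∀ r ∈ z, ((if r = A then M else 0) + (if r = B then M else 0)) - 1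
        ≤ badPay A B M r (cnt s ∅ r + 1) := by
      intro r _
      by_cases hA : r = A
      · subst hA
        simp [badPay, cnt, hAB]
        linarith
      · by_cases hB : r = B
        · subst hB
          simp [badPay, cnt, hA]
          linarith
        · simp [badPay, cnt, hA, hB]
    refine le_trans (le_of_eq ?_) (Finset.sum_le_sum this)
    rw [Finset.sum_sub_distrib, Finset.sum_add_distrib, Finset.sum_ite_eq', Finset.sum_ite_eq']
    simp [hAz, hBz]
    ring
  have hz : (z.card : ℝ) ≤ Fintype.card ρ := by exact_mod_cast Finset.card_le_univ z
  linarith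

lemma BadConfig.exists_NE_not_greedy [Fintype ρ] {SS : Finset (Finset ρ)} (h : BadConfig SS) :
    ∃ P : ρ → ℕ → ℝ, MonotonePay 2 P ∧ ∃ s : Fin 2 → Finset ρ,
      IsNE SS P s ∧ ¬ IsGreedy SS P s := by
  obtain ⟨A, B, s1, h1, s2, h2, s3, h3, hA1, hB1, hA2, hA3, hB3, hB2⟩ := h
  have hAB : A ≠ B := fun h => hB2 (h ▸ hA2)
  obtain ⟨M, hM⟩ : ∃ M : ℝ, M = 2 * Fintype.card ρ + 1 := ⟨_, rfl⟩
  obtain ⟨⟨x, y⟩, hxy, hmin⟩ := Finset.exists_min_image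
    ((SS.filter fun t => A ∈ t ∧ B ∉ t) ×ˢ (SS.filter fun t => B ∈ t ∧ A ∉ t))
    (fun p => p.1.card + p.2.card + (p.1 ∩ p.2).card)
    ⟨(s2, s3), by simp [*]⟩
  simp only [Finset.mem_product, Finset.mem_filter, Prod.forall] at hxy hmin
  obtain ⟨⟨hx, hAx, hBx⟩, hy, hBy, hAy⟩ := hxy
  have hs : IsProfile SS ![x, y] := by
    intro i
    fin_cases i
    · exact hx
    · exact hy
  have e0 : (Finset.univ.erase 0 : Finset (Fin 2)) = {1} := by decide
  have e1 : (Finset.univ.erase 1 : Finset (Fin 2)) = {0} := by decide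
  refine ⟨badPay A B M, badPay_mono A B (by rw [hM]; positivity) 2, ![x, y],
    isNE_iff.2 ⟨hs, ?_⟩, ?_⟩
  · intro i _ t ht
    fin_cases i
    · simp only [Fin.zero_eta, e0, joinVal_singleton]
      refine duel_best hM hAB hAx hBx hBy hAy (fun t ht hA hB => ?_) t ht
      have := hmin t y ⟨⟨ht, hA, hB⟩, hy, hBy, hAy⟩
      change x.card + (x ∩ y).card ≤ t.card + (t ∩ y).card
      omega
    · simp only [Fin.mk_one, e1, joinVal_singleton]
      rw [← duel_swap, ← duel_swap A B]
      refine duel_best hM hAB.symm hBy hAy hAx hBx (fun t ht hB hA => ?_) t ht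
      have := hmin x t ⟨⟨hx, hAx, hBx⟩, ht, hB, hA⟩
      change y.card + (y ∩ x).card ≤ t.card + (t ∩ x).card
      rw [Finset.inter_comm y, Finset.inter_comm t]
      omega
  · intro hg
    obtain ⟨-, π, hπ, hBR⟩ := isGreedy_iff.1 hg
    -- The player of lowest rank has no predecessors.
    obtain ⟨i, -, hi⟩ := Finset.exists_min_image Finset.univ π ⟨(0 : Fin 2), Finset.mem_univ _⟩
    have hempty : (Finset.univ.filter fun j => π j < π i) = ∅ := by
      refine Finset.filter_false_of_mem fun j hj => not_lt.2 (hi j hj)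
    have hle := hBR i s1 h1
    rw [hempty] at hle
    refine absurd hle (not_le.2 ?_)
    fin_cases i
    · exact first_mover hM _ hAB hBx hA1 hB1
    · have hcomm : badPay A B M = badPay B A M := by
        funext r k
        simp only [badPay, or_comm]
      rw [hcomm]
      exact first_mover hM _ hAB.symm hAy hB1 hA1

end Counterexample

/-- A subset-free congestion game form is tree representable (has no bad
configuration) iff every monotone symmetric congestion game with this form
satisfies `Z(G) = NE(G)`. -/
theorem tree_representable_iff_greedy_eq_NE {ρ : Type} [DecidableEq ρ] [Fintype ρ]
    (SS : Finset (Finset ρ)) (hform : ValidForm SS) (hsf : SubsetFree SS) :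
    (¬ BadConfig SS) ↔
      (∀ n : ℕ, 1 ≤ n → ∀ P : ρ → ℕ → ℝ, MonotonePay n P →
        ∀ s : Fin n → Finset ρ, (IsGreedy SS P s ↔ IsNE SS P s)) := by
  constructor
  · intro hbad n _ P hP s
    have hP' : MonotonePay (Fintype.card (Fin n)) P := by rwa [Fintype.card_fin]
    exact ⟨fun h => h.isNE hbad hP', fun h => h.isGreedy hbad hP'⟩
  · intro h hbad
    obtain ⟨P, hP, s, hNE, hng⟩ := hbad.exists_NE_not_greedy
    exact hng ((h 2 (by norm_num) P hP s).2 hNE)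
end

section
/- Let F = (R, Σ) be a subset-free congestion game form. If every monotone symmetric congestion game G ∈ 𝒢(F) satisfies Z(G) = NE(G), then F has no bad configuration (i.e., F is tree representable). -/
/-!
A bad configuration `A, B ∈ s1`, `A ∈ s2 \ s3`, `B ∈ s3 \ s2` yields a two-player monotone game
with a Nash equilibrium that is not greedy, namely `(s2, s3)`.

Payoffs are chosen so that, against `s3`, the resources with nonnegative payoff are exactly those
of `s2`, and symmetrically: a resource of `s2 ∩ s3` pays positively even when shared, a resource
in just one of the two pays positively only when used alone, and all others pay negatively. Hence
`s2` and `s3` are best responses to each other among all sets of resources. In addition `A` and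
`B` pay a huge amount `M` when used alone. Whoever comes first in a greedy order faces empty
resources, where `s1` collects about `2 * M` while `s2` and `s3` collect only about `M` each; so
no order makes `(s2, s3)` greedy.
-/

open Finset

/-- Two-player payoff of a resource: `p r` when used alone, `q r` when shared. -/
def pairPay {ρ : Type} (p q : ρ → ℝ) (r : ρ) (k : ℕ) : ℝ := if k ≤ 1 then p r else q r

lemma cgUtil_pair_zero {ρ : Type} [DecidableEq ρ] (p q : ρ → ℝ) (x y : Finset ρ) :
    cgUtil (pairPay p q) ![x, y] 0 = ∑ r ∈ x, if r ∈ y then q r else p r := by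
  unfold cgUtil
  refine Finset.sum_congr rfl fun r hr => ?_
  have hr' : r ∈ x := hr
  by_cases h : r ∈ y <;>
    simp [cgCong, pairPay, Fin.univ_succ, Finset.filter_insert, Finset.filter_singleton, hr', h]

lemma cgUtil_pair_one {ρ : Type} [DecidableEq ρ] (p q : ρ → ℝ) (x y : Finset ρ) :
    cgUtil (pairPay p q) ![x, y] 1 = ∑ r ∈ y, if r ∈ x then q r else p r := by
  unfold cgUtil
  refine Finset.sum_congr rfl fun r hr => ?_
  have hr' : r ∈ y := hr
  by_cases h : r ∈ x <;>
    simp [cgCong, pairPay, Fin.univ_succ, Finset.filter_insert, Finset.filter_singleton, hr', h]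

lemma sum_le_of_sign {ρ : Type} [DecidableEq ρ] (g : ρ → ℝ) (x y : Finset ρ)
    (hpos : ∀ r ∈ y, 0 ≤ g r) (hneg : ∀ r, r ∉ y → g r ≤ 0) :
    ∑ r ∈ x, g r ≤ ∑ r ∈ y, g r := by
  have h1 : ∑ r ∈ x, g r ≤ ∑ r ∈ x ∩ y, g r := by
    rw [← Finset.sum_inter_add_sum_sdiff x y g]
    have : ∑ r ∈ x \ y, g r ≤ 0 :=
      Finset.sum_nonpos fun r hr => hneg r (Finset.mem_sdiff.1 hr).2
    linarith
  exact h1.trans (Finset.sum_le_sum_of_subset_of_nonneg Finset.inter_subset_right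
    fun r hr _ => hpos r hr)

/-- Value bound for a strategy with a single valuable resource `C`, worth `M`: at most `M` plus two
per resource. -/
lemma sum_le_single {ρ : Type} [DecidableEq ρ] [Fintype ρ] (p : ρ → ℝ) (M : ℝ) (C : ρ)
    (x : Finset ρ) (hC : C ∈ x) (hM : p C = M) (h : ∀ r ∈ x, r ≠ C → p r ≤ 2) :
    ∑ r ∈ x, p r ≤ M + 2 * Fintype.card ρ := by
  rw [← Finset.add_sum_erase x p hC, hM]
  have h1 : ∑ r ∈ x.erase C, p r ≤ (x.erase C).card • (2 : ℝ) :=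
    Finset.sum_le_card_nsmul _ _ _ fun r hr =>
      h r (Finset.mem_of_mem_erase hr) (Finset.ne_of_mem_erase hr)
  have h2 : ((x.erase C).card : ℝ) ≤ Fintype.card ρ := by
    exact_mod_cast Finset.card_le_univ _
  rw [nsmul_eq_mul] at h1
  linarith

lemma le_sum_pair {ρ : Type} [DecidableEq ρ] [Fintype ρ] (p : ρ → ℝ) (M : ℝ) (A B : ρ)
    (hAB : A ≠ B) (x : Finset ρ) (hA : A ∈ x) (hB : B ∈ x) (hpA : p A = M) (hpB : p B = M)
    (h : ∀ r, -1 ≤ p r) :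
    2 * M - Fintype.card ρ ≤ ∑ r ∈ x, p r := by
  have hB' : B ∈ x.erase A := Finset.mem_erase.2 ⟨hAB.symm, hB⟩
  rw [← Finset.add_sum_erase x p hA, ← Finset.add_sum_erase _ p hB', hpA, hpB]
  have h1 : ((x.erase A).erase B).card • (-1 : ℝ) ≤ ∑ r ∈ (x.erase A).erase B, p r :=
    Finset.card_nsmul_le_sum _ _ _ fun r _ => h r
  have h2 : (((x.erase A).erase B).card : ℝ) ≤ Fintype.card ρ := by
    exact_mod_cast Finset.card_le_univ _
  rw [nsmul_eq_mul] at h1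
  linarith

/-- In a greedy profile of a two-player game, the first mover's strategy maximizes the total
payoff for lone use. -/
lemma exists_first_mover {ρ : Type} [DecidableEq ρ] (SS : Finset (Finset ρ)) (p q : ρ → ℝ)
    (s : Fin 2 → Finset ρ) (hs : IsGreedy SS (pairPay p q) s) :
    ∃ i, ∀ t ∈ SS, ∑ r ∈ t, p r ≤ ∑ r ∈ s i, p r := by
  obtain ⟨-, π, -, hbest⟩ := hs
  obtain ⟨i, -, hi⟩ := Finset.exists_min_image Finset.univ π ⟨(0 : Fin 2), Finset.mem_univ _⟩
  have h0 : ∀ r, greedyCong s π i r = 0 := fun r => by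
    simp only [greedyCong, Finset.card_eq_zero, Finset.filter_eq_empty_iff, not_and, not_lt]
    exact fun j hj _ => hi j hj
  refine ⟨i, fun t ht => ?_⟩
  simpa [h0, pairPay] using hbest i t ht

/-- Against `s3` the resources of `s2` pay nonnegatively and all others nonpositively, and
symmetrically, so `s2` and `s3` are mutual best responses. -/
lemma isNE_pair {ρ : Type} [DecidableEq ρ] (SS : Finset (Finset ρ)) (p q : ρ → ℝ)
    (s2 s3 : Finset ρ) (h2 : s2 ∈ SS) (h3 : s3 ∈ SS)
    (hp : ∀ r, r ∈ s2 ∨ r ∈ s3 → 0 ≤ p r) (hp' : ∀ r, r ∉ s2 → r ∉ s3 → p r ≤ 0)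
    (hq : ∀ r, r ∈ s2 → r ∈ s3 → 0 ≤ q r) (hq' : ∀ r, r ∉ s2 ∨ r ∉ s3 → q r ≤ 0) :
    IsNE SS (pairPay p q) ![s2, s3] := by
  refine ⟨fun i => by fin_cases i <;> simpa, fun i t _ => ?_⟩
  fin_cases i
  · have hu : Function.update ![s2, s3] 0 t = ![t, s3] := by
      ext j; fin_cases j <;> simp
    change cgUtil _ _ 0 ≥ cgUtil _ (Function.update ![s2, s3] 0 t) 0
    rw [hu, cgUtil_pair_zero, cgUtil_pair_zero]
    refine sum_le_of_sign _ _ _ (fun r hr => ?_) (fun r hr => ?_) <;> split_ifs with h <;> grind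
  · have hu : Function.update ![s2, s3] 1 t = ![s2, t] := by
      ext j; fin_cases j <;> simp
    change cgUtil _ _ 1 ≥ cgUtil _ (Function.update ![s2, s3] 1 t) 1
    rw [hu, cgUtil_pair_one, cgUtil_pair_one]
    refine sum_le_of_sign _ _ _ (fun r hr => ?_) (fun r hr => ?_) <;> split_ifs with h <;> grind

/-- If every monotone symmetric congestion game with a given subset-free form
satisfies `Z(G) = NE(G)`, then the form has no bad configuration. -/
theorem tree_representable_of_greedy_eq_NE {ρ : Type} [DecidableEq ρ] [Fintype ρ]
    (SS : Finset (Finset ρ)) (hform : ValidForm SS) (hsf : SubsetFree SS)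
    (hZN : ∀ n : ℕ, 1 ≤ n → ∀ P : ρ → ℕ → ℝ, MonotonePay n P →
      ∀ s : Fin n → Finset ρ, (IsGreedy SS P s ↔ IsNE SS P s)) :
    ¬ BadConfig SS := by
  rintro ⟨A, B, s1, h1, s2, h2, s3, h3, hA1, hB1, hA2, hA3, hB3, hB2⟩
  have hAB : A ≠ B := fun h => hA3 (h ▸ hB3)
  -- The first mover's comparison is `2 * M - card ρ > M + 2 * card ρ`.
  obtain ⟨M, hM⟩ : ∃ M : ℝ, M = 3 * Fintype.card ρ + 2 := ⟨_, rfl⟩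
  have hN : (0 : ℝ) ≤ Fintype.card ρ := Nat.cast_nonneg _
  obtain ⟨p, hp⟩ : ∃ p : ρ → ℝ, ∀ r, p r =
      if r = A ∨ r = B then M else if r ∈ s2 ∨ r ∈ s3 then 2 else -1 := ⟨_, fun _ => rfl⟩
  obtain ⟨q, hq⟩ : ∃ q : ρ → ℝ, ∀ r, q r = if r ∈ s2 ∧ r ∈ s3 then 1 else -2 :=
    ⟨_, fun _ => rfl⟩
  have hM2 : 2 ≤ M := by linarith
  have hpq : ∀ r, q r < p r := fun r => by rw [hp, hq]; split_ifs <;> grind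
  have hmono : MonotonePay 2 (pairPay p q) := fun r k l hk hkl hl => by
    obtain rfl : k = 1 := by omega
    obtain rfl : l = 2 := by omega
    simpa [pairPay] using hpq r
  have hNE : IsNE SS (pairPay p q) ![s2, s3] := by
    apply isNE_pair _ _ _ _ _ h2 h3
    · intro r hr; rw [hp]; split_ifs <;> linarith
    · intro r hr hr'; rw [hp]; split_ifs <;> grind
    · intro r hr hr'; rw [hq]; split_ifs <;> grind
    · intro r hr; rw [hq]; split_ifs <;> grind
  obtain ⟨i, hi⟩ := exists_first_mover _ _ _ _ ((hZN 2 (by norm_num) _ hmono _).2 hNE)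
  have hs1 := le_sum_pair p M A B hAB s1 hA1 hB1 (by simp [hp]) (by simp [hp])
    (fun r => by rw [hp]; split_ifs <;> linarith)
  have hs2 := sum_le_single p M A s2 hA2 (by simp [hp])
    (fun r hr hne => by rw [hp]; split_ifs <;> grind)
  have hs3 := sum_le_single p M B s3 hB3 (by simp [hp])
    (fun r hr hne => by rw [hp]; split_ifs <;> grind)
  have hfirst := hi s1 h1
  fin_cases i
  · change _ ≤ ∑ r ∈ s2, p r at hfirst
    linarith
  · change _ ≤ ∑ r ∈ s3, p r at hfirst
    linarith
end

section
/- Let G be a monotone symmetric congestion game whose game form is subset-free and has no bad configuration (i.e., G is a tree representable congestion game). Then every greedy profile of G is a pure Nash equilibrium: Z(G) ⊆ NE(G). -/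
/-!
The absence of a bad configuration means that strategies branch like paths in a tree: if strategies
`a` and `f` share a resource outside a strategy `t`, then they share exactly the same resources with
`t` (`inter_eq_of_not_badConfig`).

The players are added one at a time in the greedy order, and each stage is shown to be an
equilibrium among the players present. Let `f` be the strategy of the newcomer, `a` that of an
earlier player, and `t` a possible deviation.
* If `f` misses `a \ t`, the newcomer leaves the payoff on `a \ t` unchanged and, by monotonicity,
  can only lower the payoff on `t \ a`, so the deviation is still unprofitable.
* If `f` meets `a \ t`, then `a` and `f` have the same trace on `t`, so `t \ a = t \ f`.
  By the earlier equilibrium (with deviation `f`), the payoff of `a` is now at least that of `f`;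
  since `f` is a best response, deviating from `a` to `t` does not pay either.
-/

open Finset

/-- If `f` and `a` share a resource outside `t`, then they have the same trace on `t`. -/
lemma inter_eq_of_not_badConfig {ρ : Type} [DecidableEq ρ] {SS : Finset (Finset ρ)}
    (htr : ¬ BadConfig SS) {a f t : Finset ρ} (ha : a ∈ SS) (hf : f ∈ SS) (ht : t ∈ SS)
    {x : ρ} (hxa : x ∈ a) (hxf : x ∈ f) (hxt : x ∉ t) : f ∩ t = a ∩ t := by
  ext y
  simp only [Finset.mem_inter]
  constructor
  · rintro ⟨hyf, hyt⟩
    refine ⟨?_, hyt⟩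
    by_contra hya
    exact htr ⟨y, x, f, hf, t, ht, a, ha, hyf, hxf, hyt, hya, hxa, hxt⟩
  · rintro ⟨hya, hyt⟩
    refine ⟨?_, hyt⟩
    by_contra hyf
    exact htr ⟨y, x, a, ha, t, ht, f, hf, hya, hxa, hyt, hyf, hxf, hxt⟩

/-- Congestion of `r` caused by the players of rank below `k`; by definition,
`greedyCong s π i = prefixCong s π (π i)`. -/
def prefixCong {ρ ι : Type} [DecidableEq ρ] [Fintype ι] (s : ι → Finset ρ)
    (π : ι → ℕ) (k : ℕ) (r : ρ) : ℕ :=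
  (Finset.univ.filter (fun j => r ∈ s j ∧ π j < k)).card

lemma prefixCong_lt_card {ρ ι : Type} [DecidableEq ρ] [Fintype ι] (s : ι → Finset ρ)
    (π : ι → ℕ) (k : ℕ) (r : ρ) (i : ι) (hi : r ∉ s i) :
    prefixCong s π k r < Fintype.card ι := by
  refine Finset.card_lt_univ_of_notMem (x := i) ?_
  simp [hi]

lemma prefixCong_succ {ρ ι : Type} [DecidableEq ρ] [DecidableEq ι] [Fintype ι]
    (s : ι → Finset ρ) (π : ι → ℕ) (hπ : Function.Injective π) (n : ι) (r : ρ) :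
    prefixCong s π (π n + 1) r = prefixCong s π (π n) r + if r ∈ s n then 1 else 0 := by
  unfold prefixCong
  have key : ∀ j, π j < π n + 1 ↔ j = n ∨ π j < π n := by
    intro j
    rw [Nat.lt_succ_iff_lt_or_eq, hπ.eq_iff, or_comm]
  by_cases h : r ∈ s n
  · rw [if_pos h, ← Finset.card_insert_of_notMem (a := n) (by simp)]
    congr 1
    ext j
    simp only [Finset.mem_filter, Finset.mem_univ, true_and, Finset.mem_insert, key]
    constructor
    · tauto
    · rintro (rfl | hj)
      · exact ⟨h, Or.inl rfl⟩
      · tauto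
  · rw [if_neg h, Nat.add_zero]
    congr 1
    ext j
    simp only [Finset.mem_filter, Finset.mem_univ, true_and, key]
    constructor
    · rintro ⟨hj, rfl | hlt⟩
      · exact absurd hj h
      · exact ⟨hj, hlt⟩
    · tauto

/-- Each stage of the greedy process is an equilibrium among the players present. Resources common
to the old and the new strategy contribute equally and are cancelled. -/
lemma prefix_equilibrium {ρ ι : Type} [DecidableEq ρ] [DecidableEq ι] [Fintype ι]
    {SS : Finset (Finset ρ)} {P : ρ → ℕ → ℝ} (htr : ¬ BadConfig SS)
    (hmono : MonotonePay (Fintype.card ι) P) {s : ι → Finset ρ} (hs : IsProfile SS s)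
    {π : ι → ℕ} (hπ : Function.Injective π)
    (hbest : ∀ i : ι, ∀ t ∈ SS, (∑ r ∈ s i, P r (greedyCong s π i r + 1)) ≥
        ∑ r ∈ t, P r (greedyCong s π i r + 1)) (k : ℕ) :
    ∀ i, π i < k → ∀ t ∈ SS, ∑ r ∈ t \ s i, P r (prefixCong s π k r + 1) ≤
      ∑ r ∈ s i \ t, P r (prefixCong s π k r) := by
  induction k with
  | zero => intro i hi; omega
  | succ k ih =>
    by_cases hn : ∃ n, π n = k
    · obtain ⟨n, rfl⟩ := hn
      have hc := prefixCong_succ s π hπ n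
      -- The newcomer has no profitable deviation, as a greedy best response.
      have hnew : ∀ t ∈ SS, ∑ r ∈ t \ s n, P r (prefixCong s π (π n + 1) r + 1) ≤
          ∑ r ∈ s n \ t, P r (prefixCong s π (π n + 1) r) := by
        intro t ht
        have h := Finset.sum_sdiff_le_sum_sdiff.mpr (hbest n t ht)
        calc _ = ∑ r ∈ t \ s n, P r (greedyCong s π n r + 1) := by
              refine Finset.sum_congr rfl fun r hr => ?_
              rw [hc, if_neg (Finset.mem_sdiff.mp hr).2]; rfl
          _ ≤ _ := h
          _ = _ := by
              refine Finset.sum_congr rfl fun r hr => ?_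
              rw [hc, if_pos (Finset.mem_sdiff.mp hr).1]; rfl
      intro i hi t ht
      rcases eq_or_ne i n with rfl | hin
      · exact hnew t ht
      have hlt : π i < π n := lt_of_le_of_ne (Nat.lt_succ_iff.mp hi) (hπ.ne hin)
      by_cases hmeet : ∃ x, x ∈ s i ∧ x ∈ s n ∧ x ∉ t
      · obtain ⟨x, hxi, hxn, hxt⟩ := hmeet
        have hint := inter_eq_of_not_badConfig htr (hs i) (hs n) ht hxi hxn hxt
        have hsd : t \ s i = t \ s n := by
          rw [← Finset.sdiff_inter_self_left t (s i), ← Finset.sdiff_inter_self_left t (s n),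
            Finset.inter_comm t (s i), Finset.inter_comm t (s n), hint]
        have hold : ∑ r ∈ s n \ s i, P r (prefixCong s π (π n + 1) r) ≤
            ∑ r ∈ s i \ s n, P r (prefixCong s π (π n + 1) r) := by
          calc _ = ∑ r ∈ s n \ s i, P r (prefixCong s π (π n) r + 1) := by
                refine Finset.sum_congr rfl fun r hr => ?_
                rw [hc, if_pos (Finset.mem_sdiff.mp hr).1]
            _ ≤ _ := ih i hlt (s n) (hs n)
            _ = _ := by
                refine Finset.sum_congr rfl fun r hr => ?_
                rw [hc, if_neg (Finset.mem_sdiff.mp hr).2, Nat.add_zero]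
        have h1 := Finset.sum_sdiff_le_sum_sdiff.mp hold
        have h2 := Finset.sum_inter_add_sum_sdiff (s i) t
          (fun r => P r (prefixCong s π (π n + 1) r))
        have h3 := Finset.sum_inter_add_sum_sdiff (s n) t
          (fun r => P r (prefixCong s π (π n + 1) r))
        have h4 := hnew t ht
        rw [hint] at h3
        rw [hsd]
        linarith
      · push Not at hmeet
        calc _ ≤ ∑ r ∈ t \ s i, P r (prefixCong s π (π n) r + 1) := by
              refine Finset.sum_le_sum fun r hr => ?_
              have hcard := prefixCong_lt_card s π (π n + 1) r i (Finset.mem_sdiff.mp hr).2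
              rw [hc] at hcard ⊢
              split_ifs at hcard ⊢
              · exact (hmono r _ _ (by omega) (by omega) (by omega)).le
              · exact le_rfl
          _ ≤ _ := ih i hlt t ht
          _ = _ := by
              refine Finset.sum_congr rfl fun r hr => ?_
              obtain ⟨hri, hrt⟩ := Finset.mem_sdiff.mp hr
              rw [hc, if_neg fun h => hrt (hmeet r hri h), Nat.add_zero]
    · -- No player has rank `k`, so both prefixes consist of the same players.
      have hlt : ∀ j, π j < k + 1 ↔ π j < k := by
        intro j
        have : π j ≠ k := fun h => hn ⟨j, h⟩
        omega
      have hc : ∀ r, prefixCong s π (k + 1) r = prefixCong s π k r := by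
        intro r
        simp only [prefixCong, hlt]
      intro i hi t ht
      simp only [hc]
      exact ih i ((hlt i).mp hi) t ht

lemma cgCong_update {ρ ι : Type} [DecidableEq ρ] [DecidableEq ι] [Fintype ι]
    (s : ι → Finset ρ) (i : ι) (t : Finset ρ) (r : ρ) (hr : r ∈ t) :
    cgCong (Function.update s i t) r = cgCong s r + if r ∈ s i then 0 else 1 := by
  unfold cgCong
  have key : Finset.univ.filter (fun j => r ∈ Function.update s i t j) =
      insert i (Finset.univ.filter (fun j => r ∈ s j)) := by
    ext j
    by_cases hj : j = i
    · subst hj; simp [hr]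
    · simp [hj]
  rw [key]
  by_cases h : r ∈ s i
  · rw [if_pos h, Finset.insert_eq_of_mem (by simpa using h), Nat.add_zero]
  · rw [if_neg h, Finset.card_insert_of_notMem (by simpa using h)]

/-- In a monotone symmetric congestion game whose subset-free game form has no
bad configuration, every greedy profile is a pure Nash equilibrium. -/
theorem greedy_subset_NE {ρ ι : Type} [DecidableEq ρ] [Fintype ρ]
    [DecidableEq ι] [Fintype ι] [Nonempty ι]
    (SS : Finset (Finset ρ)) (P : ρ → ℕ → ℝ)
    (hform : ValidForm SS) (hsf : SubsetFree SS) (htr : ¬ BadConfig SS)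
    (hmono : MonotonePay (Fintype.card ι) P)
    (s : ι → Finset ρ) (hg : IsGreedy SS P s) :
    IsNE SS P s := by
  obtain ⟨hs, π, hπ, hbest⟩ := hg
  refine ⟨hs, fun i t ht => ?_⟩
  -- Any `K` above all ranks gives the full profile as a prefix.
  obtain ⟨K, hK⟩ : ∃ K, ∀ j, π j < K :=
    ⟨Finset.univ.sup π + 1, fun j => Nat.lt_succ_of_le (Finset.le_sup (Finset.mem_univ j))⟩
  have hc : ∀ r, prefixCong s π K r = cgCong s r := by
    intro r
    simp only [prefixCong, cgCong, hK, and_true]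
  have h := prefix_equilibrium htr hmono hs hπ hbest K i (hK i) t ht
  simp only [hc] at h
  have h1 := Finset.sum_inter_add_sum_sdiff (s i) t (fun r => P r (cgCong s r))
  have h2 := Finset.sum_inter_add_sum_sdiff t (s i)
    (fun r => P r (cgCong (Function.update s i t) r))
  have h3 : ∑ r ∈ t ∩ s i, P r (cgCong (Function.update s i t) r) =
      ∑ r ∈ s i ∩ t, P r (cgCong s r) := by
    rw [Finset.inter_comm]
    refine Finset.sum_congr rfl fun r hr => ?_
    obtain ⟨hri, hrt⟩ := Finset.mem_inter.mp hr
    rw [cgCong_update s i t r hrt, if_pos hri, Nat.add_zero]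
  have h4 : ∑ r ∈ t \ s i, P r (cgCong (Function.update s i t) r) =
      ∑ r ∈ t \ s i, P r (cgCong s r + 1) := by
    refine Finset.sum_congr rfl fun r hr => ?_
    obtain ⟨hrt, hri⟩ := Finset.mem_sdiff.mp hr
    rw [cgCong_update s i t r hrt, if_neg hri]
  unfold cgUtil
  rw [Function.update_self]
  linarith
end

section
/- Let G be a monotone symmetric congestion game with player set N, |N| ≥ 2, whose game form is subset-free and has no bad configuration. Let s be a pure Nash equilibrium of G and let i ∈ N be a player whose utility is minimal, i.e., U^i(s) ≤ U^j(s) for all j ∈ N. Then the restriction of s to the players N \ {i} is a pure Nash equilibrium of the symmetric congestion game G' with player set N \ {i} and the same resources, strategy set and payoff functions. -/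
/-!
Fix a player `j ≠ i` and a deviation `t`. Write `a = s i`, `b = s j`, and let `E r` be the number of
players other than `i` and `j` using `r`; every congestion in play is `E` plus indicators of `a`,
`b` or `t`. Since there is no bad configuration, `t ∩ a` and `t ∩ b` are nested, as are `a ∩ t` and
`a ∩ b`. This leaves two cases.

* `t ∩ a ⊆ b`: the resources of `t \ b` are not used by `i`, so removing `i` does not improve them,
  while by monotonicity it can only improve those of `b \ t`. As `j` does not want to move to `t`
  in the full game, she does not want to in the restricted one.
* `t ∩ b = a ∩ b`: in the full game `i` does not want to move to `t`, and her utility is at most that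
  of `j`, so moving `i` to `t` yields at most `U^j(s)`. On `t ∩ b = a ∩ b` both sums have the same
  terms; on `t \ b` and `b \ t` the terms are those of the restricted game.

`deviation_le` is this comparison of sums; `cgUtil_eq` and `cgUtil_restrict` express the utilities
through `E`.
-/

open Finset

/-- The number of players other than `i` and `j` who use `r`. -/
def congOthers {ρ ι : Type} [DecidableEq ρ] [DecidableEq ι] [Fintype ι]
    (s : ι → Finset ρ) (i j : ι) (r : ρ) : ℕ :=
  ((Finset.univ.filter (fun k => r ∈ s k)) \ {i, j}).card

lemma congOthers_comm {ρ ι : Type} [DecidableEq ρ] [DecidableEq ι] [Fintype ι]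
    (s : ι → Finset ρ) (i j : ι) (r : ρ) : congOthers s i j r = congOthers s j i r := by
  rw [congOthers, congOthers, Finset.pair_comm]

lemma congOthers_update {ρ ι : Type} [DecidableEq ρ] [DecidableEq ι] [Fintype ι]
    (s : ι → Finset ρ) (i j : ι) (t : Finset ρ) (r : ρ) :
    congOthers (Function.update s j t) i j r = congOthers s i j r := by
  unfold congOthers
  congr 1
  ext k
  by_cases hk : k = j <;> simp [hk]

lemma cgCong_eq {ρ ι : Type} [DecidableEq ρ] [DecidableEq ι] [Fintype ι]
    (s : ι → Finset ρ) {i j : ι} (hij : j ≠ i) (r : ρ) :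
    cgCong s r = congOthers s i j r + (if r ∈ s i then 1 else 0) + (if r ∈ s j then 1 else 0) := by
  have h := Finset.card_sdiff_add_card_inter (Finset.univ.filter (fun k => r ∈ s k)) {i, j}
  have h2 : ((Finset.univ.filter (fun k => r ∈ s k)) ∩ {i, j}).card
      = (if r ∈ s i then 1 else 0) + (if r ∈ s j then 1 else 0) := by
    rw [Finset.inter_comm, ← Finset.filter_mem_eq_inter, Finset.card_filter,
      Finset.sum_pair hij.symm]
    simp
  rw [cgCong, ← h, h2, congOthers, add_assoc]

lemma cgCong_restrict {ρ ι : Type} [DecidableEq ρ] [DecidableEq ι] [Fintype ι]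
    (s : ι → Finset ρ) {i j : ι} (hij : j ≠ i) (r : ρ) :
    cgCong (fun k : {k : ι // k ≠ i} => s k.val) r
      = congOthers s i j r + (if r ∈ s j then 1 else 0) := by
  have h := cgCong_eq s hij r
  have h2 : cgCong (fun k : {k : ι // k ≠ i} => s k.val) r + (if r ∈ s i then 1 else 0)
      = cgCong s r := by
    simp only [cgCong, Finset.card_filter]
    rw [← Finset.sum_erase_add _ _ (Finset.mem_univ i)]
    congr 1
    exact (Finset.sum_subtype (Finset.univ.erase i) (by simp)
      (fun k => if r ∈ s k then 1 else 0)).symm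
  omega

lemma cgUtil_eq {ρ ι : Type} [DecidableEq ρ] [DecidableEq ι] [Fintype ι] (P : ρ → ℕ → ℝ)
    (s : ι → Finset ρ) {i j : ι} (hij : j ≠ i) :
    cgUtil P s j = ∑ r ∈ s j, P r (congOthers s i j r + (if r ∈ s i then 1 else 0) + 1) :=
  Finset.sum_congr rfl fun r hr => by rw [cgCong_eq s hij, if_pos hr]

lemma cgUtil_restrict {ρ ι : Type} [DecidableEq ρ] [DecidableEq ι] [Fintype ι] (P : ρ → ℕ → ℝ)
    (s : ι → Finset ρ) {i j : ι} (hij : j ≠ i) :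
    cgUtil P (fun k : {k : ι // k ≠ i} => s k.val) ⟨j, hij⟩
      = ∑ r ∈ s j, P r (congOthers s i j r + 1) :=
  Finset.sum_congr rfl fun r hr => by rw [cgCong_restrict s hij, if_pos hr]

lemma sum_le_sum_of_compare {ρ : Type} [DecidableEq ρ] {t b : Finset ρ} {f g h : ρ → ℝ}
    (hle : ∑ r ∈ t, h r ≤ ∑ r ∈ b, f r)
    (ht : ∀ r ∈ t \ b, g r ≤ h r) (hb : ∀ r ∈ b \ t, f r ≤ g r)
    (hi : ∀ r ∈ t ∩ b, f r = h r) : ∑ r ∈ t, g r ≤ ∑ r ∈ b, g r := by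
  have h1 := Finset.sum_le_sum ht
  have h2 := Finset.sum_le_sum hb
  have h3 := Finset.sum_congr rfl hi
  have e (u v : Finset ρ) (q : ρ → ℝ) := Finset.sum_inter_add_sum_sdiff u v q
  have e1 := e t b h
  have e2 := e t b g
  have e3 := e b t f
  have e4 := e b t g
  rw [Finset.inter_comm] at e3 e4
  linarith

/-- The comparison of sums behind the theorem, with `a` and `b` the strategies of `i` and `j`. The
hypotheses `hj`, `hi` say that `j`, respectively `i`, does not gain by moving to `t` in the full
game. -/
lemma deviation_le {ρ : Type} [DecidableEq ρ] {SS : Finset (Finset ρ)} (htr : ¬ BadConfig SS)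
    (P : ρ → ℕ → ℝ) (E : ρ → ℕ) {a b t : Finset ρ} (ha : a ∈ SS) (hb : b ∈ SS) (ht : t ∈ SS)
    (hmono : ∀ r ∈ a, r ∈ b → P r (E r + 1 + 1) ≤ P r (E r + 1))
    (hj : ∑ r ∈ t, P r (E r + (if r ∈ a then 1 else 0) + 1)
      ≤ ∑ r ∈ b, P r (E r + (if r ∈ a then 1 else 0) + 1))
    (hi : ∑ r ∈ t, P r (E r + (if r ∈ b then 1 else 0) + 1)
      ≤ ∑ r ∈ a, P r (E r + (if r ∈ b then 1 else 0) + 1))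
    (hmin : ∑ r ∈ a, P r (E r + (if r ∈ b then 1 else 0) + 1)
      ≤ ∑ r ∈ b, P r (E r + (if r ∈ a then 1 else 0) + 1)) :
    ∑ r ∈ t, P r (E r + 1) ≤ ∑ r ∈ b, P r (E r + 1) := by
  by_cases h : ∀ r ∈ t, r ∈ a → r ∈ b
  · refine sum_le_sum_of_compare hj (fun r hr => ?_) (fun r hr => ?_) (fun r _ => rfl)
    · rw [Finset.mem_sdiff] at hr
      have : r ∉ a := fun hra => hr.2 (h r hr.1 hra)
      simp [this]
    · rw [Finset.mem_sdiff] at hr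
      split_ifs with hra
      · exact hmono r hra hr.1
      · simp
  · push Not at h
    obtain ⟨A, hAt, hAa, hAb⟩ := h
    have htb : ∀ r ∈ t, r ∈ b → r ∈ a := by
      intro r hrt hrb
      by_contra hra
      exact htr ⟨A, r, t, ht, a, ha, b, hb, hAt, hrt, hAa, hAb, hrb, hra⟩
    have hab : ∀ r ∈ b, r ∈ a → r ∈ t := by
      intro r hrb hra
      by_contra hrt
      exact htr ⟨A, r, a, ha, t, ht, b, hb, hAa, hra, hAt, hAb, hrb, hrt⟩
    refine sum_le_sum_of_compare (hi.trans hmin) (fun r hr => ?_) (fun r hr => ?_) (fun r hr => ?_)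
    · rw [Finset.mem_sdiff] at hr
      simp [hr.2]
    · rw [Finset.mem_sdiff] at hr
      have : r ∉ a := fun hra => hr.2 (hab r hr.1 hra)
      simp [this]
    · rw [Finset.mem_inter] at hr
      simp [hr.2, htb r hr.1 hr.2]

/-- In a monotone symmetric congestion game with at least two players, whose
subset-free game form has no bad configuration: if `s` is a pure Nash
equilibrium and player `i` has minimal utility, then the restriction of `s` to
the remaining players is a pure Nash equilibrium of the game with player set
`N \ {i}` and the same resources, strategies and payoffs. -/
theorem restriction_of_NE_is_NE {ρ ι : Type} [DecidableEq ρ] [Fintype ρ]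
    [DecidableEq ι] [Fintype ι]
    (SS : Finset (Finset ρ)) (P : ρ → ℕ → ℝ)
    (hform : ValidForm SS) (hsf : SubsetFree SS) (htr : ¬ BadConfig SS)
    (hmono : MonotonePay (Fintype.card ι) P)
    (hcard : 2 ≤ Fintype.card ι)
    (s : ι → Finset ρ) (hne : IsNE SS P s)
    (i : ι) (hmin : ∀ j : ι, cgUtil P s i ≤ cgUtil P s j) :
    IsNE SS P (fun j : {j : ι // j ≠ i} => s j.val) := by
  refine ⟨fun k => hne.1 k.val, ?_⟩
  rintro ⟨j, hij⟩ t ht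
  have hupd : Function.update (fun k : {k : ι // k ≠ i} => s k.val) ⟨j, hij⟩ t
      = fun k : {k : ι // k ≠ i} => Function.update s j t k.val := by
    funext k
    by_cases hk : k = ⟨j, hij⟩
    · subst hk
      simp
    · have : k.val ≠ j := fun h => hk (Subtype.ext h)
      simp [hk, this]
  have hj := hne.2 j t ht
  have hi := hne.2 i t ht
  have hm := hmin j
  rw [hupd, cgUtil_restrict P s hij, cgUtil_restrict P (Function.update s j t) hij]
  rw [cgUtil_eq P s hij, cgUtil_eq P (Function.update s j t) hij] at hj
  rw [cgUtil_eq P s hij.symm, cgUtil_eq P (Function.update s i t) hij.symm] at hi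
  rw [cgUtil_eq P s hij, cgUtil_eq P s hij.symm] at hm
  simp only [congOthers_update, congOthers_comm s j i, Function.update_self,
    Function.update_of_ne hij, Function.update_of_ne hij.symm] at hj hi hm ⊢
  refine deviation_le htr P (congOthers s i j) (hne.1 i) (hne.1 j) ht ?_ hj hi hm
  intro r hra hrb
  -- `r` is used by both `i` and `j`, so the larger argument is its congestion in the full game.
  have hc : cgCong s r = congOthers s i j r + 1 + 1 := by
    rw [cgCong_eq s hij, if_pos hra, if_pos hrb]
  have hle : cgCong s r ≤ Fintype.card ι := Finset.card_le_univ _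
  exact (hmono r _ _ (by omega) (by omega) (hc ▸ hle)).le
end

section
/- Let F = (R, Σ) be a subset-free congestion game form containing a bad configuration: resources A, C and strategies s1, s2, s3 ∈ Σ with A ∈ (s1 ∩ s3) \ s2 and C ∈ (s1 ∩ s2) \ s3. If every monotone symmetric congestion game G ∈ 𝒢(F) satisfies Z(G) = NE(G), then there exists a strategy s4 ∈ Σ with s4 ≠ s2 and s4 ⊆ s2 ∪ (s3 \ s1). -/
/-!
Suppose `s2` is the only strategy contained in `s2 ∪ (s3 \ s1)`. Then a two-player monotone game
has a greedy profile that is not an equilibrium: player `0` moves first and takes `s1`, player `1`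
answers with `s2`.

With `L = 2 * |R| + 1` and `M = |R| * L + 1`, a first user of `r` gets `0` on `s1`, `-1` on
`(s2 ∪ s3) \ s1` and `-M` elsewhere, so `s1` is optimal for the first mover. A second user gets
`-M` on `s1 \ s2`, `-L` on `C`, and one less than the first user on every other resource.
Every strategy other than `s2` meets `s1 \ s2` or leaves `s1 ∪ s2 ∪ s3`, hence costs the second
mover at least `M`; so `s2` is her best response. But now player `0` shares `C`, at cost `L`,
whereas `s3` avoids `C` and costs at most `2 * |R|`, so she gains by deviating to `s3`.
-/

open Finset

/-- Payoff of a resource to its only user. -/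
def payOne {ρ : Type} [DecidableEq ρ] (s1 s2 s3 : Finset ρ) (M : ℝ) (r : ρ) : ℝ :=
  if r ∈ s1 then 0 else if r ∈ s2 ∪ s3 then -1 else -M

/-- Payoff of a resource to each of two users. -/
def payTwo {ρ : Type} [DecidableEq ρ] (C : ρ) (s1 s2 s3 : Finset ρ) (L M : ℝ) (r : ρ) : ℝ :=
  if r ∈ s1 then (if r ∈ s2 then (if r = C then -L else -1) else -M)
  else payOne s1 s2 s3 M r - 1

theorem sum_le_of_mem_of_nonpos {ρ : Type} (t : Finset ρ) (h : ρ → ℝ)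
    (hh : ∀ r ∈ t, h r ≤ 0) {a : ρ} (ha : a ∈ t) : ∑ r ∈ t, h r ≤ h a := by
  have := Finset.single_le_sum (f := fun r => - h r) (fun r hr => by simpa using hh r hr) ha
  simp only [Finset.sum_neg_distrib] at this
  linarith

theorem neg_card_mul_le_sum {ρ : Type} [Fintype ρ] (t : Finset ρ) (h : ρ → ℝ) (c : ℝ) (hc : 0 ≤ c)
    (hh : ∀ r ∈ t, -c ≤ h r) : -((Fintype.card ρ : ℝ) * c) ≤ ∑ r ∈ t, h r := by
  have h1 := Finset.card_nsmul_le_sum t h (-c) hh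
  have h2 : (t.card : ℝ) ≤ Fintype.card ρ := by exact_mod_cast Finset.card_le_univ t
  rw [nsmul_eq_mul] at h1
  nlinarith

/-- Given a bad configuration `(A, C, s1, s2, s3)` in a subset-free form: if
every monotone game with this form satisfies `Z(G) = NE(G)`, then there is a
strategy `s4 ≠ s2` with `s4 ⊆ s2 ∪ (s3 \ s1)`. -/
theorem exists_s4 {ρ : Type} [DecidableEq ρ] [Fintype ρ]
    (SS : Finset (Finset ρ)) (hform : ValidForm SS) (hsf : SubsetFree SS)
    (A C : ρ) (s1 s2 s3 : Finset ρ)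
    (h1 : s1 ∈ SS) (h2 : s2 ∈ SS) (h3 : s3 ∈ SS)
    (hA1 : A ∈ s1) (hA3 : A ∈ s3) (hA2 : A ∉ s2)
    (hC1 : C ∈ s1) (hC2 : C ∈ s2) (hC3 : C ∉ s3)
    (hZN : ∀ n : ℕ, 1 ≤ n → ∀ P : ρ → ℕ → ℝ, MonotonePay n P →
      ∀ s : Fin n → Finset ρ, (IsGreedy SS P s ↔ IsNE SS P s)) :
    ∃ s4 ∈ SS, s4 ≠ s2 ∧ s4 ⊆ s2 ∪ (s3 \ s1) := by
  by_contra hno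
  have hno' : ∀ t ∈ SS, t ≠ s2 → ∃ r ∈ t, r ∉ s2 ∪ (s3 \ s1) := by
    intro t ht hne
    by_contra! h
    exact hno ⟨t, ht, hne, h⟩
  let N : ℝ := Fintype.card ρ
  have hN : 0 ≤ N := Nat.cast_nonneg _
  let L : ℝ := 2 * N + 1
  have hL : 1 ≤ L := by simp only [L]; linarith
  let M : ℝ := N * L + 1
  have hM : 1 ≤ M := by simp only [M]; nlinarith
  let f := payOne s1 s2 s3 M
  let g := payTwo C s1 s2 s3 L M
  have hf : ∀ r, f r ≤ 0 := by
    intro r; simp only [f, payOne]; split_ifs <;> linarith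
  have hgf : ∀ r, g r < f r := by
    intro r; simp only [g, f, payTwo, payOne]; split_ifs <;> linarith
  let P : ρ → ℕ → ℝ := fun r k => if k ≤ 1 then f r else g r
  have hmono : MonotonePay 2 P := by
    intro r k l hk hkl hl
    obtain rfl : k = 1 := by omega
    obtain rfl : l = 2 := by omega
    simpa [P] using hgf r
  let s : Fin 2 → Finset ρ := ![s1, s2]
  have hgreedy : IsGreedy SS P s := by
    refine ⟨fun i => by fin_cases i <;> simp [s, h1, h2], Fin.val, Fin.val_injective, ?_⟩
    have e0 : ∀ r, P r (greedyCong s Fin.val 0 r + 1) = f r := by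
      intro r; simp [P, greedyCong]
    have e1 : ∀ r, P r (greedyCong s Fin.val 1 r + 1) = if r ∈ s1 then g r else f r := by
      intro r
      by_cases h : r ∈ s1 <;> simp [P, greedyCong, s, Finset.card_filter, Fin.sum_univ_two, h, -Finset.sum_boole]
    intro i t ht
    fin_cases i
    · change ∑ r ∈ s1, P r (greedyCong s Fin.val 0 r + 1) ≥
        ∑ r ∈ t, P r (greedyCong s Fin.val 0 r + 1)
      simp only [e0]
      have a : ∑ r ∈ s1, f r = 0 := Finset.sum_eq_zero fun r hr => by simp [f, payOne, hr]
      rw [a]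
      exact Finset.sum_nonpos fun r _ => hf r
    -- Answering `s1` by `s2` yields at least `-|R| * L`; anything else yields at most `-M`.
    · change ∑ r ∈ s2, P r (greedyCong s Fin.val 1 r + 1) ≥
        ∑ r ∈ t, P r (greedyCong s Fin.val 1 r + 1)
      simp only [e1]
      by_cases hts : t = s2
      · rw [hts]
      obtain ⟨a, hat, ha⟩ := hno' t ht hts
      have b1 := neg_card_mul_le_sum s2 (fun r => if r ∈ s1 then g r else f r) L (by linarith)
        (by
          intro r hr
          simp only [f, g, payOne, payTwo, hr, if_true, Finset.mem_union, true_or]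
          split_ifs <;> linarith)
      have b2 := sum_le_of_mem_of_nonpos t (fun r => if r ∈ s1 then g r else f r)
        (by
          intro r _
          have := hf r
          have := hgf r
          split_ifs <;> linarith) hat
      have b3 : (if a ∈ s1 then g a else f a) = -M := by
        simp only [Finset.mem_union, Finset.mem_sdiff, not_or, not_and, not_not] at ha
        by_cases h : a ∈ s1
        · simp [h, g, payTwo, ha.1]
        · have : a ∉ s3 := fun h3 => h (ha.2 h3)
          simp [h, f, payOne, ha.1, this]
      have b4 : M = (Fintype.card ρ : ℝ) * L + 1 := rfl
      simp only [b3] at b2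
      linarith
  -- Player `0` would gain by leaving `s1` for `s3`, once `s2` is played.
  have hNE := ((hZN 2 (by norm_num) P hmono s).1 hgreedy).2 0 s3 h3
  have e : ∀ t : Finset ρ, cgUtil P (Function.update s 0 t) 0
      = ∑ r ∈ t, if r ∈ s2 then g r else f r := by
    intro t
    simp only [cgUtil, Function.update_self]
    refine Finset.sum_congr rfl fun r hr => ?_
    by_cases h : r ∈ s2 <;>
      simp [P, cgCong, s, Finset.card_filter, Fin.sum_univ_two, hr, h, -Finset.sum_boole]
  have hs : cgUtil P s 0 = ∑ r ∈ s1, if r ∈ s2 then g r else f r := by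
    rw [← e s1]
    congr 1
    exact (Function.update_eq_self 0 s).symm
  rw [hs, e s3] at hNE
  have c1 := sum_le_of_mem_of_nonpos s1 (fun r => if r ∈ s2 then g r else f r)
    (by
      intro r _
      have := hf r
      have := hgf r
      split_ifs <;> linarith) hC1
  have c2 : (if C ∈ s2 then g C else f C) = -L := by simp [hC2, g, payTwo, hC1]
  have c3 := neg_card_mul_le_sum s3 (fun r => if r ∈ s2 then g r else f r) 2 (by norm_num)
    (by
      intro r hr
      have : r ≠ C := fun h => hC3 (h ▸ hr)
      simp only [f, g, payOne, payTwo, hr, this, if_false, if_true, Finset.mem_union, or_true]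
      split_ifs <;> linarith)
  have c4 : L = 2 * (Fintype.card ρ : ℝ) + 1 := rfl
  simp only [c2] at c1
  linarith
end

section
/- Let F = (R, Σ) be a subset-free congestion game form. Then Σ is induced by some R-tree if and only if F has no bad configuration. -/
/-!
In an `R`-tree, two labels on a common root path are comparable: the one closer to the root lies on
every root path through the other (`RTree.label_mem_or`, `RTree.pathSet_subset`). This excludes bad
configurations.

Conversely, the absence of bad configurations says that, writing `S r` for the set of strategies
containing `r`, the sets `S r` form a laminar family: `S A` and `S B` are nested as soon as they
meet. Enumerate the resources in use by decreasing size of `S r` and put a root with `S = SS` in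
front, so that the nodes are `Fin (n + 1)` and `N v` is the set of strategies at node `v`
(`exists_enumeration`). By laminarity, `u ≤ v` and `N u ∩ N v ≠ ∅` force `N v ⊆ N u`. The
parent of `v` is the largest `u < v` with `N v ⊆ N u`. Then for any `s ∈ N v` the path set of `v`
consists of the labels in `s` of nodes up to `v`. If `v` is a leaf, no element of `s` comes after
`v`, so the path set is `s`. If `v` is the last node with `s ∈ N v`, its path set is `s`, and a
child of `v` would produce a strategy strictly containing `s`, against subset-freeness.
-/

open Finset

/-- An `R`-tree: a finite rooted tree on nodes `Fin (n+1)` with root `0`,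
every non-root node having a parent of smaller index, and non-root nodes
labeled injectively by resources (not every resource need appear). -/
structure RTree (ρ : Type) where
  n : ℕ
  parent : Fin (n + 1) → Fin (n + 1)
  parent_root : parent 0 = 0
  parent_lt : ∀ v : Fin (n + 1), v ≠ 0 → parent v < v
  label : Fin (n + 1) → ρ
  label_inj : ∀ v w : Fin (n + 1), v ≠ 0 → w ≠ 0 → label v = label w → v = w

/-- The set of labels of the non-root nodes on the path from the root to `v`. -/
def RTree.pathSet {ρ : Type} [DecidableEq ρ] (T : RTree ρ) (v : Fin (T.n + 1)) :
    Finset ρ :=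
  if h : v = 0 then ∅ else insert (T.label v) (T.pathSet (T.parent v))
  termination_by v.val
  decreasing_by exact T.parent_lt v h

/-- A node is a leaf (terminal node) if it is the parent of no non-root node. -/
def RTree.IsLeaf {ρ : Type} (T : RTree ρ) (v : Fin (T.n + 1)) : Prop :=
  ∀ u : Fin (T.n + 1), u ≠ 0 → T.parent u ≠ v

/-- The strategy set `SS` is induced by the `R`-tree `T`: the members of `SS`
are exactly the root-to-leaf label sets of `T`. -/
def RTree.Induces {ρ : Type} [DecidableEq ρ] (T : RTree ρ)
    (SS : Finset (Finset ρ)) : Prop :=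
  ∀ s : Finset ρ, s ∈ SS ↔ ∃ v : Fin (T.n + 1), T.IsLeaf v ∧ T.pathSet v = s

/-! ### Root paths in an `R`-tree -/

theorem RTree.pathSet_zero {ρ : Type} [DecidableEq ρ] (T : RTree ρ) : T.pathSet 0 = ∅ := by
  rw [RTree.pathSet]; simp

theorem RTree.mem_pathSet {ρ : Type} [DecidableEq ρ] (T : RTree ρ) {v : Fin (T.n + 1)}
    (hv : v ≠ 0) (x : ρ) :
    x ∈ T.pathSet v ↔ x = T.label v ∨ x ∈ T.pathSet (T.parent v) := by
  rw [RTree.pathSet]; simp [hv]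

/-- Induction along the parent map, starting from the root. -/
theorem RTree.induction {ρ : Type} (T : RTree ρ) {p : Fin (T.n + 1) → Prop}
    (zero : p 0) (step : ∀ v, v ≠ 0 → p (T.parent v) → p v) (v : Fin (T.n + 1)) : p v := by
  induction v using WellFoundedLT.induction with
  | ind v ih =>
    by_cases hv : v = 0
    · exact hv ▸ zero
    · exact step v hv (ih _ (T.parent_lt v hv))

theorem RTree.exists_label {ρ : Type} [DecidableEq ρ] (T : RTree ρ) {x : ρ}
    (v : Fin (T.n + 1)) (hx : x ∈ T.pathSet v) : ∃ a, a ≠ 0 ∧ T.label a = x := by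
  induction v using T.induction with
  | zero => simp [T.pathSet_zero] at hx
  | step v hv ih =>
    rcases (T.mem_pathSet hv x).1 hx with h | h
    · exact ⟨v, hv, h.symm⟩
    · exact ih h

/-- As labels are injective, a root path through the label of `a` passes through the node `a`. -/
theorem RTree.pathSet_subset {ρ : Type} [DecidableEq ρ] (T : RTree ρ) {a : Fin (T.n + 1)}
    (ha : a ≠ 0) (v : Fin (T.n + 1)) (hx : T.label a ∈ T.pathSet v) :
    T.pathSet a ⊆ T.pathSet v := by
  induction v using T.induction with
  | zero => simp [T.pathSet_zero] at hx
  | step v hv ih =>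
    rcases (T.mem_pathSet hv _).1 hx with h | h
    · rw [T.label_inj a v ha hv h]
    · exact fun y hy => (T.mem_pathSet hv y).2 (Or.inr (ih h hy))

theorem RTree.label_mem_or {ρ : Type} [DecidableEq ρ] (T : RTree ρ) {a b : Fin (T.n + 1)}
    (ha : a ≠ 0) (hb : b ≠ 0) (v : Fin (T.n + 1))
    (hav : T.label a ∈ T.pathSet v) (hbv : T.label b ∈ T.pathSet v) :
    T.label a ∈ T.pathSet b ∨ T.label b ∈ T.pathSet a := by
  induction v using T.induction with
  | zero => simp [T.pathSet_zero] at hav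
  | step v hv ih =>
    rcases (T.mem_pathSet hv _).1 hav with h | h
    · obtain rfl := T.label_inj a v ha hv h
      exact Or.inr hbv
    · rcases (T.mem_pathSet hv _).1 hbv with h' | h'
      · obtain rfl := T.label_inj b v hb hv h'
        exact Or.inl hav
      · exact ih h h'

theorem RTree.Induces.not_badConfig {ρ : Type} [DecidableEq ρ] {SS : Finset (Finset ρ)}
    {T : RTree ρ} (hT : T.Induces SS) : ¬ BadConfig SS := by
  rintro ⟨A, B, s1, h1, s2, h2, s3, h3, hA1, hB1, hA2, hA3, hB3, hB2⟩
  obtain ⟨v1, -, rfl⟩ := (hT s1).1 h1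
  obtain ⟨v2, -, rfl⟩ := (hT s2).1 h2
  obtain ⟨v3, -, rfl⟩ := (hT s3).1 h3
  obtain ⟨a, ha, rfl⟩ := T.exists_label v1 hA1
  obtain ⟨b, hb, rfl⟩ := T.exists_label v1 hB1
  rcases T.label_mem_or ha hb v1 hA1 hB1 with h | h
  · exact hA3 (T.pathSet_subset hb v3 hB3 h)
  · exact hB2 (T.pathSet_subset ha v2 hA2 h)

/-! ### Building the tree from a laminar family -/

/-- The nodes of the tree: node `0` is the root, the others enumerate the resources in use, by
decreasing number of strategies. `N v` is the set of strategies through node `v`; the third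
conclusion is laminarity of the sets `N v`, oriented by the enumeration. -/
theorem exists_enumeration {ρ : Type} [DecidableEq ρ] [Fintype ρ] (SS : Finset (Finset ρ))
    (hform : ValidForm SS) (hbad : ¬ BadConfig SS) :
    ∃ (n : ℕ) (lab : Fin (n + 1) → ρ) (N : Fin (n + 1) → Finset (Finset ρ)),
      N 0 = SS ∧
      (∀ v, (N v).Nonempty ∧ N v ⊆ SS) ∧
      (∀ u v s, u ≤ v → s ∈ N u → s ∈ N v → N v ⊆ N u) ∧
      (∀ v w, v ≠ 0 → w ≠ 0 → lab v = lab w → v = w) ∧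
      (∀ s ∈ SS, ∀ x, x ∈ s ↔ ∃ u, u ≠ 0 ∧ s ∈ N u ∧ lab u = x) := by
  classical
  obtain ⟨s0, hs0⟩ := hform.1
  obtain ⟨r0, -⟩ := hform.2 s0 hs0
  let S : ρ → Finset (Finset ρ) := fun r => SS.filter (r ∈ ·)
  have hS : ∀ r s, s ∈ S r ↔ s ∈ SS ∧ r ∈ s := by simp [S]
  let U := {r : ρ // (S r).Nonempty}
  let e0 : Fin (Fintype.card U) ≃ U := (Fintype.equivFin U).symm
  let f : Fin (Fintype.card U) → ℕᵒᵈ := fun i => OrderDual.toDual (S (e0 i).1).card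
  let e : Fin (Fintype.card U) ≃ U := (Tuple.sort f).trans e0
  have hmono : ∀ i j, i ≤ j → (S (e j).1).card ≤ (S (e i).1).card := fun i j hij =>
    Tuple.monotone_sort f hij
  have hlam : ∀ i j s, i ≤ j → s ∈ S (e i).1 → s ∈ S (e j).1 → S (e j).1 ⊆ S (e i).1 := by
    intro i j s hij hi hj
    by_contra hns
    -- If the sets are not nested in the required direction they are nested in the other one,
    -- and then the cardinalities force equality.
    have hsub : S (e i).1 ⊆ S (e j).1 := by
      by_contra hns'
      obtain ⟨t, ht, ht'⟩ := Finset.not_subset.1 hns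
      obtain ⟨t', h1, h2⟩ := Finset.not_subset.1 hns'
      simp only [hS] at *
      exact hbad ⟨(e i).1, (e j).1, s, hi.1, t', h1.1, t, ht.1, hi.2, hj.2, h1.2,
        fun h => ht' ⟨ht.1, h⟩, ht.2, fun h => h2 ⟨h1.1, h⟩⟩
    exact hns (Finset.eq_of_subset_of_card_le hsub (hmono i j hij)).ge
  refine ⟨Fintype.card U, Fin.cons r0 (fun i => (e i).1), Fin.cons SS (fun i => S (e i).1),
    rfl, ?_, ?_, ?_, ?_⟩
  · intro v
    cases v using Fin.cases with
    | zero => exact ⟨hform.1, Finset.Subset.refl _⟩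
    | succ i => exact ⟨(e i).2, Finset.filter_subset _ _⟩
  · intro u v s huv hu hv
    cases u using Fin.cases with
    | zero =>
      cases v using Fin.cases with
      | zero => exact Finset.Subset.refl _
      | succ j => exact Finset.filter_subset _ _
    | succ i =>
      cases v using Fin.cases with
      | zero => simp at huv
      | succ j => exact hlam i j s (Fin.succ_le_succ_iff.1 huv) hu hv
  · intro v w hv hw h
    cases v using Fin.cases with
    | zero => exact absurd rfl hv
    | succ i =>
      cases w using Fin.cases with
      | zero => exact absurd rfl hw
      | succ j => exact congrArg Fin.succ (e.injective (Subtype.ext h))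
  · intro s hs x
    constructor
    · intro hx
      have hx' : s ∈ S x := (hS x s).2 ⟨hs, hx⟩
      refine ⟨(e.symm ⟨x, s, hx'⟩).succ, Fin.succ_ne_zero _, ?_, ?_⟩ <;> simp [hx']
    · rintro ⟨u, hu, hsu, rfl⟩
      cases u using Fin.cases with
      | zero => exact absurd rfl hu
      | succ i => exact ((hS _ _).1 hsu).2

/-- The tree on the enumerated nodes in which the parent of `v` is the largest `u < v` with
`N v ⊆ N u`. -/
theorem exists_induces {ρ : Type} [DecidableEq ρ] [Fintype ρ] (SS : Finset (Finset ρ))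
    (hform : ValidForm SS) (hsf : SubsetFree SS) (hbad : ¬ BadConfig SS) :
    ∃ T : RTree ρ, T.Induces SS := by
  classical
  obtain ⟨n, lab, N, hN0, hN, hlam, hinj, hmem⟩ := exists_enumeration SS hform hbad
  have hpar : ∀ v : Fin (n + 1), ∃ p : Fin (n + 1), (v = 0 → p = 0) ∧
      (v ≠ 0 → p < v ∧ N v ⊆ N p ∧ ∀ u, u < v → N v ⊆ N u → u ≤ p) := by
    intro v
    by_cases hv : v = 0
    · exact ⟨0, fun _ => rfl, fun h => absurd hv h⟩
    · let F := Finset.univ.filter (fun u => u < v ∧ N v ⊆ N u)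
      have hF : F.Nonempty := ⟨0, by simp [F, Fin.pos_iff_ne_zero, hv, hN0, (hN v).2]⟩
      have hm := F.max'_mem hF
      simp only [F, Finset.mem_filter, Finset.mem_univ, true_and] at hm
      refine ⟨F.max' hF, fun h => absurd h hv, fun _ => ⟨hm.1, hm.2, fun u hu hu' => ?_⟩⟩
      exact F.le_max' u (by simp [F, hu, hu'])
  choose p hp0 hp using hpar
  let T : RTree ρ := ⟨n, p, hp0 0 rfl, fun v hv => (hp v hv).1, lab, hinj⟩
  have hpath : ∀ (v : Fin (n + 1)) s, s ∈ N v → ∀ x, x ∈ T.pathSet v ↔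
      ∃ u, u ≠ 0 ∧ u ≤ v ∧ s ∈ N u ∧ lab u = x := by
    intro v
    refine T.induction (p := fun v : Fin (n + 1) => ∀ s, s ∈ N v → ∀ x, x ∈ T.pathSet v ↔
      ∃ u, u ≠ 0 ∧ u ≤ v ∧ s ∈ N u ∧ lab u = x) ?_ ?_ v
    · intro s _ x
      rw [T.pathSet_zero]
      simp only [Finset.notMem_empty, false_iff]
      rintro ⟨u, hu, hu', -⟩
      exact hu (Fin.le_zero_iff.1 hu')
    · intro v hv ih s hs x
      rw [T.mem_pathSet hv, ih s ((hp v hv).2.1 hs)]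
      constructor
      · rintro (h | ⟨u, hu, hup, hsu, hx⟩)
        · exact ⟨v, hv, le_refl v, hs, h.symm⟩
        · exact ⟨u, hu, hup.trans (hp v hv).1.le, hsu, hx⟩
      · rintro ⟨u, hu, huv, hsu, hx⟩
        rcases huv.eq_or_lt with rfl | hlt
        · exact Or.inl hx.symm
        · exact Or.inr ⟨u, hu, (hp v hv).2.2 u hlt (hlam u v s huv hsu hs), hsu, hx⟩
  have hfull : ∀ (v : Fin (n + 1)) s, s ∈ N v → (∀ u, s ∈ N u → u ≤ v) → T.pathSet v = s := by
    intro v s hs hlast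
    ext x
    rw [hpath v s hs, hmem s ((hN v).2 hs)]
    exact ⟨fun ⟨u, h1, _, h2, h3⟩ => ⟨u, h1, h2, h3⟩,
      fun ⟨u, h1, h2, h3⟩ => ⟨u, h1, hlast u h2, h2, h3⟩⟩
  refine ⟨T, fun s => ⟨fun hs => ?_, ?_⟩⟩
  · let F := Finset.univ.filter (fun v => s ∈ N v)
    have hF : F.Nonempty := ⟨0, by simp [F, hN0, hs]⟩
    have hm : s ∈ N (F.max' hF) := by simpa [F] using F.max'_mem hF
    have hlast : ∀ u, s ∈ N u → u ≤ F.max' hF := fun u hu => F.le_max' u (by simp [F, hu])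
    have heq := hfull _ s hm hlast
    refine ⟨F.max' hF, ?_, heq⟩
    intro u hu hpu
    obtain ⟨hlt, hsub, -⟩ := hp u hu
    obtain ⟨t, ht⟩ := (hN u).1
    replace hpu : p u = F.max' hF := hpu
    rw [hpu] at hlt hsub
    refine hsf s hs t ((hN u).2 ht) ?_ ?_
    · rintro rfl
      exact absurd (hlast u ht) (not_le.2 hlt)
    · intro x hx
      rw [← heq, hpath _ t (hsub ht)] at hx
      obtain ⟨w, hw, -, htw, hxw⟩ := hx
      exact (hmem t ((hN u).2 ht) x).2 ⟨w, hw, htw, hxw⟩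
  · rintro ⟨v, hleaf, rfl⟩
    change Fin (n + 1) at v
    obtain ⟨s, hs⟩ := (hN v).1
    rw [hfull v s hs ?_]
    · exact (hN v).2 hs
    by_contra! hex
    -- The first node after `v` whose strategies include `s` is a child of `v`.
    let F := Finset.univ.filter (fun u => s ∈ N u ∧ v < u)
    have hF : F.Nonempty := by
      obtain ⟨u, hu⟩ := hex
      exact ⟨u, by simp [F, hu]⟩
    have hm : s ∈ N (F.min' hF) ∧ v < F.min' hF := by simpa [F] using F.min'_mem hF
    have hu0 : F.min' hF ≠ 0 := Fin.ne_zero_of_lt hm.2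
    obtain ⟨hlt, hsub, hmax⟩ := hp _ hu0
    refine hleaf (F.min' hF) hu0 (le_antisymm ?_ ?_)
    · by_contra hnle
      have hmin : F.min' hF ≤ p (F.min' hF) :=
        F.min'_le _ (by simpa [F] using ⟨hsub hm.1, not_le.1 hnle⟩)
      exact absurd hlt (not_lt.2 hmin)
    · exact hmax v hm.2 (hlam v _ s hm.2.le hs hm.1)

/-- For a subset-free congestion game form `(R, Σ)`: `Σ` is induced by some
`R`-tree iff the form has no bad configuration. -/
theorem tree_representable_iff_no_badConfig {ρ : Type} [DecidableEq ρ] [Fintype ρ]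
    (SS : Finset (Finset ρ)) (hform : ValidForm SS) (hsf : SubsetFree SS) :
    (∃ T : RTree ρ, T.Induces SS) ↔ ¬ BadConfig SS :=
  ⟨fun ⟨_, hT⟩ => hT.not_badConfig, exists_induces SS hform hsf⟩
end
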